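/- Let h > 0, let k ∈ ℝ² with k ≠ 0, and let g₀ ∈ ℝ² satisfy k·g₀ = 0. Define V : ℝ² × ℝ → ℝ² by V(x, z) = cos(k·x) · (cosh(‖k‖(z+h)) / (‖k‖ · sinh(‖k‖·h))) · g₀. Then: (i) each component of V is harmonic on ℝ³, i.e. the sum of its second partial derivatives with respect to x₁, x₂ and z vanishes; (ii) ∂_z V(x, 0) = cos(k·x) g₀ and ∂_z V(x, −h) = 0 for all x; (iii) the vertical average V̄(x) := (1/h) ∫_{−h}^{0} V(x, z) dz satisfies div_H V̄(x) := ∂_{x₁}V̄₁(x) + ∂_{x₂}V̄₂(x) = 0 for all x ∈ ℝ². In particular (V, P_s ≡ 0) solves the stationary hydrostatic Stokes equations −ΔV + ∇_H P_s = 0, div_H V̄ = 0 with Neumann boundary data ∂_z V = cos(k·x) g₀ on the top and ∂_z V = 0 on the bottom. -/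

import Mathlib

/-!
Write `κ = ‖k‖` and `φ(z) = cosh (κ (z + h)) / (κ sinh (κ h))`, so that `V = cos(k·x) φ(z) g₀`.
Since `∂ᵢ² cos(k·x) = -kᵢ² cos(k·x)` and `φ'' = κ² φ` with `κ² = k₁² + k₂²`, each component is
harmonic. The Neumann conditions hold because `φ'(z) = sinh (κ (z + h)) / sinh (κ h)`, where
`sinh (κ h) ≠ 0` because `k ≠ 0` and `h > 0`. Finally `V̄(x)` is a constant multiple of
`cos(k·x) g₀`, whose horizontal divergence is a multiple of `sin(k·x) (k·g₀) = 0`.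
-/

lemma hasDerivAt_cos_affine_mul (a b c s : ℝ) :
    HasDerivAt (fun t => Real.cos (a * t + b) * c) (-(Real.sin (a * s + b) * a * c)) s := by
  have h1 : HasDerivAt (fun t : ℝ => a * t + b) a s := by
    simpa using ((hasDerivAt_id s).const_mul a).add_const b
  exact (h1.cos.mul_const c).congr_deriv (by ring)

lemma hasDerivAt_sin_affine_mul (a b c s : ℝ) :
    HasDerivAt (fun t => Real.sin (a * t + b) * c) (Real.cos (a * s + b) * a * c) s := by
  have h1 : HasDerivAt (fun t : ℝ => a * t + b) a s := by
    simpa using ((hasDerivAt_id s).const_mul a).add_const b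
  exact h1.sin.mul_const c

lemma deriv_deriv_cos_affine_mul (a b c s : ℝ) :
    deriv (fun s => deriv (fun t => Real.cos (a * t + b) * c) s) s
      = -(a ^ 2 * (Real.cos (a * s + b) * c)) := by
  have h1 : (fun s => deriv (fun t => Real.cos (a * t + b) * c) s)
      = fun t => Real.sin (a * t + b) * (-(a * c)) := by
    funext s
    rw [(hasDerivAt_cos_affine_mul a b c s).deriv]
    ring
  rw [h1, (hasDerivAt_sin_affine_mul a b _ s).deriv]
  ring

lemma hasDerivAt_cosh_shift_mul (κ h c s : ℝ) :
    HasDerivAt (fun t => Real.cosh (κ * (t + h)) * c) (Real.sinh (κ * (s + h)) * (κ * c)) s := by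
  have h1 : HasDerivAt (fun t : ℝ => κ * (t + h)) κ s := by
    simpa using ((hasDerivAt_id s).add_const h).const_mul κ
  exact (h1.cosh.mul_const c).congr_deriv (by ring)

lemma deriv_deriv_cosh_shift_mul (κ h c s : ℝ) :
    deriv (fun s => deriv (fun t => Real.cosh (κ * (t + h)) * c) s) s
      = κ ^ 2 * (Real.cosh (κ * (s + h)) * c) := by
  have h1 : (fun s => deriv (fun t => Real.cosh (κ * (t + h)) * c) s)
      = fun t => Real.sinh (κ * (t + h)) * (κ * c) := by
    funext s
    exact (hasDerivAt_cosh_shift_mul κ h c s).deriv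
  have h2 : HasDerivAt (fun t : ℝ => κ * (t + h)) κ s := by
    simpa using ((hasDerivAt_id s).add_const h).const_mul κ
  rw [h1, (h2.sinh.mul_const (κ * c)).deriv]
  ring

/-- A single mode `cos(k·x) cosh(κ(z+h)) / d * g` is harmonic as soon as `κ² = k₁² + k₂²`; the
normalisation `d` is irrelevant. -/
lemma harmonic_mode (k₁ k₂ κ h d g : ℝ) (hκ : κ ^ 2 = k₁ ^ 2 + k₂ ^ 2) (x₁ x₂ z : ℝ) :
    deriv (fun s => deriv (fun t =>
        Real.cos (k₁ * t + k₂ * x₂) * (Real.cosh (κ * (z + h)) / d) * g) s) x₁ +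
      deriv (fun s => deriv (fun t =>
        Real.cos (k₁ * x₁ + k₂ * t) * (Real.cosh (κ * (z + h)) / d) * g) s) x₂ +
      deriv (fun s => deriv (fun t =>
        Real.cos (k₁ * x₁ + k₂ * x₂) * (Real.cosh (κ * (t + h)) / d) * g) s) z = 0 := by
  have e1 : (fun t => Real.cos (k₁ * t + k₂ * x₂) * (Real.cosh (κ * (z + h)) / d) * g)
      = fun t => Real.cos (k₁ * t + k₂ * x₂) * (Real.cosh (κ * (z + h)) / d * g) := by
    funext t; ring
  have e2 : (fun t => Real.cos (k₁ * x₁ + k₂ * t) * (Real.cosh (κ * (z + h)) / d) * g)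
      = fun t => Real.cos (k₂ * t + k₁ * x₁) * (Real.cosh (κ * (z + h)) / d * g) := by
    funext t; rw [add_comm (k₁ * x₁)]; ring
  have e3 : (fun t => Real.cos (k₁ * x₁ + k₂ * x₂) * (Real.cosh (κ * (t + h)) / d) * g)
      = fun t => Real.cosh (κ * (t + h)) * (Real.cos (k₁ * x₁ + k₂ * x₂) / d * g) := by
    funext t; ring
  rw [e1, e2, e3, deriv_deriv_cos_affine_mul, deriv_deriv_cos_affine_mul,
    deriv_deriv_cosh_shift_mul, hκ, add_comm (k₂ * x₂)]
  ring

/-- The single Fourier-mode vector field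
`V(x,z) = cos(k·x) (cosh(‖k‖(z+h)) / (‖k‖ sinh(‖k‖h))) g₀`, with `k·g₀ = 0`, has
harmonic components, satisfies the Neumann boundary conditions
`∂_z V(x,0) = cos(k·x) g₀`, `∂_z V(x,-h) = 0`, and its vertical average
`V̄(x) = (1/h)∫_{-h}^0 V(x,z) dz` is horizontally divergence free; i.e. `(V, Pₛ ≡ 0)`
solves the stationary hydrostatic Stokes equations with Neumann data on the top. -/
theorem stmt_12 (h k₁ k₂ g₁ g₂ : ℝ) (hh : 0 < h) (hk : (k₁, k₂) ≠ (0, 0))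
    (horth : k₁ * g₁ + k₂ * g₂ = 0)
    (V : ℝ → ℝ → ℝ → ℝ × ℝ)
    (hV : ∀ x₁ x₂ z : ℝ, V x₁ x₂ z =
      (Real.cos (k₁ * x₁ + k₂ * x₂) *
        (Real.cosh (Real.sqrt (k₁ ^ 2 + k₂ ^ 2) * (z + h)) /
          (Real.sqrt (k₁ ^ 2 + k₂ ^ 2) * Real.sinh (Real.sqrt (k₁ ^ 2 + k₂ ^ 2) * h))))
        • (g₁, g₂)) :
    -- (i) each component of `V` is harmonic on ℝ³
    ((∀ x₁ x₂ z : ℝ,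
      deriv (fun s => deriv (fun t => (V t x₂ z).1) s) x₁ +
      deriv (fun s => deriv (fun t => (V x₁ t z).1) s) x₂ +
      deriv (fun s => deriv (fun t => (V x₁ x₂ t).1) s) z = 0) ∧
     (∀ x₁ x₂ z : ℝ,
      deriv (fun s => deriv (fun t => (V t x₂ z).2) s) x₁ +
      deriv (fun s => deriv (fun t => (V x₁ t z).2) s) x₂ +
      deriv (fun s => deriv (fun t => (V x₁ x₂ t).2) s) z = 0)) ∧
    -- (ii) Neumann boundary conditions at the top and bottom
    ((∀ x₁ x₂ : ℝ, deriv (fun t => V x₁ x₂ t) 0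
        = Real.cos (k₁ * x₁ + k₂ * x₂) • ((g₁, g₂) : ℝ × ℝ)) ∧
     (∀ x₁ x₂ : ℝ, deriv (fun t => V x₁ x₂ t) (-h) = 0)) ∧
    -- (iii) the vertical average is horizontally divergence free
    (∀ x₁ x₂ : ℝ,
      deriv (fun s => ((1 / h) • ∫ z in (-h)..(0 : ℝ), V s x₂ z : ℝ × ℝ).1) x₁ +
      deriv (fun s => ((1 / h) • ∫ z in (-h)..(0 : ℝ), V x₁ s z : ℝ × ℝ).2) x₂ = 0) := by
  set κ := Real.sqrt (k₁ ^ 2 + k₂ ^ 2) with hκdef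
  have hκ : κ ^ 2 = k₁ ^ 2 + k₂ ^ 2 := Real.sq_sqrt (by positivity)
  have hκpos : 0 < κ := by
    apply Real.sqrt_pos.mpr
    by_contra hle
    apply hk
    have h1 : k₁ = 0 := by nlinarith [sq_nonneg k₁, sq_nonneg k₂]
    have h2 : k₂ = 0 := by nlinarith [sq_nonneg k₁, sq_nonneg k₂]
    rw [h1, h2]
  have hsinh : Real.sinh (κ * h) ≠ 0 := (Real.sinh_pos_iff.mpr (mul_pos hκpos hh)).ne'
  have hz : ∀ x₁ x₂ z : ℝ, HasDerivAt (fun t => V x₁ x₂ t)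
      ((Real.cos (k₁ * x₁ + k₂ * x₂) * (Real.sinh (κ * (z + h)) / Real.sinh (κ * h)))
        • ((g₁, g₂) : ℝ × ℝ)) z := by
    intro x₁ x₂ z
    have h1 := (hasDerivAt_cosh_shift_mul κ h
      (Real.cos (k₁ * x₁ + k₂ * x₂) / (κ * Real.sinh (κ * h))) z).smul_const
        ((g₁, g₂) : ℝ × ℝ)
    have e : (fun t => V x₁ x₂ t) = fun t => (Real.cosh (κ * (t + h)) *
        (Real.cos (k₁ * x₁ + k₂ * x₂) / (κ * Real.sinh (κ * h)))) • ((g₁, g₂) : ℝ × ℝ) := by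
      funext t
      rw [hV]
      congr 1
      ring
    rw [e]
    refine h1.congr_deriv ?_
    congr 1
    field_simp
  refine ⟨⟨?_, ?_⟩, ⟨?_, ?_⟩, ?_⟩
  · intro x₁ x₂ z
    simp only [hV, Prod.smul_fst, smul_eq_mul]
    exact harmonic_mode k₁ k₂ κ h _ g₁ hκ x₁ x₂ z
  · intro x₁ x₂ z
    simp only [hV, Prod.smul_snd, smul_eq_mul]
    exact harmonic_mode k₁ k₂ κ h _ g₂ hκ x₁ x₂ z
  · intro x₁ x₂
    rw [(hz x₁ x₂ 0).deriv, zero_add, div_self hsinh, mul_one]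
  · intro x₁ x₂
    rw [(hz x₁ x₂ (-h)).deriv]
    simp
  · intro x₁ x₂
    -- The same constant `I = ∫ φ` enters both components of the average.
    obtain ⟨I, hI⟩ : ∃ I : ℝ, ∀ y₁ y₂ : ℝ, ∫ z in (-h)..(0 : ℝ), V y₁ y₂ z
        = (Real.cos (k₁ * y₁ + k₂ * y₂) * I) • ((g₁, g₂) : ℝ × ℝ) := by
      refine ⟨∫ z in (-h)..(0 : ℝ),
        Real.cosh (κ * (z + h)) / (κ * Real.sinh (κ * h)), fun y₁ y₂ => ?_⟩
      simp only [hV]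
      rw [intervalIntegral.integral_smul_const, intervalIntegral.integral_const_mul]
    have e1 : (fun s => ((1 / h) • ∫ z in (-h)..(0 : ℝ), V s x₂ z : ℝ × ℝ).1)
        = fun s => Real.cos (k₁ * s + k₂ * x₂) * (1 / h * I * g₁) := by
      funext s
      rw [hI]
      simp only [Prod.smul_fst, smul_eq_mul]
      ring
    have e2 : (fun s => ((1 / h) • ∫ z in (-h)..(0 : ℝ), V x₁ s z : ℝ × ℝ).2)
        = fun s => Real.cos (k₂ * s + k₁ * x₁) * (1 / h * I * g₂) := by
      funext s
      rw [hI, add_comm (k₁ * x₁)]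
      simp only [Prod.smul_snd, smul_eq_mul]
      ring
    rw [e1, e2, (hasDerivAt_cos_affine_mul _ _ _ _).deriv,
      (hasDerivAt_cos_affine_mul _ _ _ _).deriv, add_comm (k₂ * x₂)]
    linear_combination (-(Real.sin (k₁ * x₁ + k₂ * x₂) * (1 / h * I))) * horth
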